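/- arXiv:2101.04950 — 3 statements merged into one kernel-verified Lean document; each statement's English description precedes it below -/
import Mathlib

section
/- Let V be a finite type and let f : V → V → ℝ be a nonnegative circulation, i.e. f u v ≥ 0 for all u, v and for every vertex v the total inflow ∑_u f u v equals the total outflow ∑_u f v u. If f is not identically zero, then the support of f contains a simple directed cycle: there exist m ≥ 1 and c : Fin (m+1) → V with c 0 = c m, with c injective on the first m indices, such that f (c i) (c (i+1)) > 0 for every i < m. -/
/-- Every self-map of a nonempty finite type has a periodic point. -/
theorem exists_mem_periodicPts_of_finite {α : Type*} [Finite α] [Nonempty α] (s : α → α) :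
    ∃ x, x ∈ Function.periodicPts s := by
  obtain ⟨x⟩ := ‹Nonempty α›
  obtain ⟨a, b, hab, h⟩ := Finite.exists_ne_map_eq_of_infinite (fun n : ℕ => s^[n] x)
  wlog hlt : a < b generalizing a b
  · exact this b a hab.symm h.symm (by omega)
  refine ⟨s^[a] x, b - a, by omega, ?_⟩
  change s^[b - a] (s^[a] x) = s^[a] x
  rw [← Function.iterate_add_apply, Nat.sub_add_cancel hlt.le]
  exact h.symm

/-- In a nonnegative circulation, every vertex entered by a positive arc is left by one. -/
theorem exists_pos_out_of_pos_in {V : Type*} [Fintype V] {f : V → V → ℝ}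
    (hnn : ∀ u v, 0 ≤ f u v) (hcons : ∀ v, ∑ u, f u v = ∑ u, f v u)
    {u v : V} (huv : 0 < f u v) : ∃ w, 0 < f v w := by
  have hin : 0 < ∑ w, f w v :=
    Finset.sum_pos' (fun w _ => hnn w v) ⟨u, Finset.mem_univ u, huv⟩
  rw [hcons v] at hin
  obtain ⟨w, -, hw⟩ := Finset.exists_lt_of_sum_lt (s := Finset.univ) (f := fun _ : V => (0 : ℝ))
    (g := f v) (by simpa using hin)
  exact ⟨w, hw⟩

/-- A nonzero nonnegative circulation on a finite vertex set contains a
simple directed cycle in its support: there are `m ≥ 1` and `c : Fin (m+1) → V` with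
`c 0 = c m`, injective on the first `m` indices, and `f (c i) (c (i+1)) > 0` for
every `i < m`. -/
theorem stmt2 {V : Type*} [Fintype V] (f : V → V → ℝ)
    (hnn : ∀ u v, 0 ≤ f u v)
    (hcons : ∀ v, ∑ u, f u v = ∑ u, f v u)
    (hne : f ≠ 0) :
    ∃ m : ℕ, 1 ≤ m ∧ ∃ c : Fin (m + 1) → V,
      c 0 = c (Fin.last m) ∧
      Function.Injective (fun i : Fin m => c i.castSucc) ∧
      ∀ i : Fin m, 0 < f (c i.castSucc) (c i.succ) := by
  obtain ⟨a, b, hab⟩ : ∃ a b, 0 < f a b := by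
    by_contra! h
    exact hne (funext₂ fun u v => le_antisymm (h u v) (hnn u v))
  have hstep : ∀ v : {v // ∃ u, 0 < f u v}, ∃ w : {v // ∃ u, 0 < f u v}, 0 < f v w := by
    rintro ⟨v, u, huv⟩
    obtain ⟨w, hw⟩ := exists_pos_out_of_pos_in hnn hcons huv
    exact ⟨⟨w, v, hw⟩, hw⟩
  choose s hs using hstep
  have : Nonempty {v // ∃ u, 0 < f u v} := ⟨⟨b, a, hab⟩⟩
  obtain ⟨x, hx⟩ := exists_mem_periodicPts_of_finite s
  refine ⟨Function.minimalPeriod s x, Function.minimalPeriod_pos_of_mem_periodicPts hx,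
    fun i => (s^[i] x : V), ?_, ?_, ?_⟩
  · simp [Function.iterate_minimalPeriod]
  · intro i j hij
    exact Fin.ext (Function.iterate_injOn_Iio_minimalPeriod i.isLt j.isLt (Subtype.ext hij))
  · intro i
    simpa [Function.iterate_succ_apply'] using hs (s^[i] x)
end

section
/- Let V be a finite type, f : V → V → ℝ a nonnegative circulation, and c : Fin (m+1) → V a simple directed cycle of length m ≥ 1 with f (c i) (c (i+1)) > 0 for every i < m. Let ε be the minimum of f (c i) (c (i+1)) over i < m, and define g : V → V → ℝ by g u v = f u v − ε if (u,v) is an arc of the cycle and g u v = f u v otherwise. Then g is again a nonnegative circulation, the support of g is contained in the support of f, and there is at least one pair (u,v) with f u v > 0 but g u v = 0; in particular f = g + ε·χ where χ is the indicator function of the arcs of the cycle. -/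
open Classical

/-- The indicator of the arcs of a path with pairwise distinct tails is the sum of the indicators
of its individual arcs. -/
lemma ite_exists_arc_eq_sum {V : Type*} {m : ℕ} (c : Fin (m + 1) → V)
    (hinj : Function.Injective (fun i : Fin m => c i.castSucc)) (u v : V) :
    (if ∃ i : Fin m, c i.castSucc = u ∧ c i.succ = v then (1 : ℝ) else 0) =
      ∑ i : Fin m, if c i.castSucc = u ∧ c i.succ = v then (1 : ℝ) else 0 := by
  split_ifs with h
  · obtain ⟨i, hu, hv⟩ := h
    rw [Finset.sum_eq_single i _ (by simp), if_pos ⟨hu, hv⟩]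
    intro j _ hji
    exact if_neg fun hj => hji (hinj (hj.1.trans hu.symm))
  · push Not at h
    exact (Finset.sum_eq_zero fun i _ => if_neg fun hi => h i hi.1 hi.2).symm

/-- The indicator of the arcs of a simple directed cycle satisfies flow conservation. -/
lemma sum_ite_exists_arc_comm {V : Type*} [Fintype V] {m : ℕ} (c : Fin (m + 1) → V)
    (hc0 : c 0 = c (Fin.last m))
    (hinj : Function.Injective (fun i : Fin m => c i.castSucc)) (v : V) :
    (∑ u, if ∃ i : Fin m, c i.castSucc = u ∧ c i.succ = v then (1 : ℝ) else 0) =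
      ∑ u, if ∃ i : Fin m, c i.castSucc = v ∧ c i.succ = u then (1 : ℝ) else 0 := by
  have hin : (∑ u, ∑ i : Fin m, if c i.castSucc = u ∧ c i.succ = v then (1 : ℝ) else 0) =
      ∑ i : Fin m, if c i.succ = v then (1 : ℝ) else 0 := by
    rw [Finset.sum_comm]
    simp [ite_and]
  have hout : (∑ u, ∑ i : Fin m, if c i.castSucc = v ∧ c i.succ = u then (1 : ℝ) else 0) =
      ∑ i : Fin m, if c i.castSucc = v then (1 : ℝ) else 0 := by
    rw [Finset.sum_comm]
    simp [ite_and]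
  simp_rw [ite_exists_arc_eq_sum c hinj]
  rw [hin, hout]
  have hsucc := Fin.sum_univ_succ fun i => if c i = v then (1 : ℝ) else 0
  rw [Fin.sum_univ_castSucc, hc0] at hsucc
  linarith

/-- Subtracting from a nonnegative circulation `f` the minimum value `ε`
of `f` along a simple directed cycle (with positive flow on all its arcs) yields again
a nonnegative circulation `g`, with support contained in that of `f`, killing at least
one arc of the support; and `f = g + ε·χ` where `χ` is the indicator of the cycle's
arcs. -/
theorem stmt3 {V : Type*} [Fintype V] {m : ℕ} (hm : 1 ≤ m)
    (f : V → V → ℝ)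
    (hnn : ∀ u v, 0 ≤ f u v)
    (hcons : ∀ v, ∑ u, f u v = ∑ u, f v u)
    (c : Fin (m + 1) → V)
    (hc0 : c 0 = c (Fin.last m))
    (hinj : Function.Injective (fun i : Fin m => c i.castSucc))
    (hpos : ∀ i : Fin m, 0 < f (c i.castSucc) (c i.succ))
    (ε : ℝ)
    (hε : IsLeast {x : ℝ | ∃ i : Fin m, x = f (c i.castSucc) (c i.succ)} ε)
    (g : V → V → ℝ)
    (hg : ∀ u v, g u v =
      if ∃ i : Fin m, c i.castSucc = u ∧ c i.succ = v then f u v - ε else f u v) :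
    (∀ u v, 0 ≤ g u v) ∧
    (∀ v, ∑ u, g u v = ∑ u, g v u) ∧
    (∀ u v, g u v ≠ 0 → f u v ≠ 0) ∧
    (∃ u v, 0 < f u v ∧ g u v = 0) ∧
    (∀ u v, f u v =
      g u v + ε * (if ∃ i : Fin m, c i.castSucc = u ∧ c i.succ = v then 1 else 0)) := by
  obtain ⟨⟨k, hk⟩, hmin⟩ := hε
  have hdecomp : ∀ u v, f u v =
      g u v + ε * (if ∃ i : Fin m, c i.castSucc = u ∧ c i.succ = v then 1 else 0) := by
    intro u v
    rw [hg]
    split_ifs <;> ring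
  refine ⟨fun u v => ?_, fun v => ?_, fun u v hguv hfuv => ?_, ?_, hdecomp⟩
  · rw [hg]
    split_ifs with h
    · obtain ⟨i, rfl, rfl⟩ := h
      exact sub_nonneg.2 (hmin ⟨i, rfl⟩)
    · exact hnn u v
  · have h := hcons v
    simp_rw [hdecomp, Finset.sum_add_distrib, ← Finset.mul_sum] at h
    rw [sum_ite_exists_arc_comm c hc0 hinj v] at h
    exact add_right_cancel h
  · rw [hg] at hguv
    split_ifs at hguv with h
    · obtain ⟨i, rfl, rfl⟩ := h
      exact (hpos i).ne' hfuv
    · exact hguv hfuv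
  · refine ⟨_, _, hpos k, ?_⟩
    rw [hg, if_pos ⟨k, rfl, rfl⟩, hk, sub_self]
end

section
/- Let V be a finite type, c : Fin (m+1) → V a simple directed cycle of length m ≥ 1, and χ : V → V → ℝ the indicator function of the arcs of c. If χ = g + h where g and h are both nonnegative circulations on V, then there exists a ∈ [0,1] such that g = a·χ and h = (1−a)·χ. In other words, χ cannot be written as the sum of two elements of the circulation cone that are not scalar multiples of χ, so χ spans an extreme ray of the cone of nonnegative circulations. -/
open Classical

/-- A circulation supported on the arcs of a simple cycle `d 0, d 1, …, d m = d 0` takes the same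
value on all arcs of the cycle. -/
theorem circulation_eq_on_cycle_arcs {V : Type*} [Fintype V] {m : ℕ} {d : ℕ → V}
    (hd : d 0 = d m) (hinj : Set.InjOn d (Set.Iio m)) {g : V → V → ℝ}
    (hcons : ∀ v, ∑ u, g u v = ∑ u, g v u)
    (hsupp : ∀ u v, g u v ≠ 0 → ∃ k < m, d k = u ∧ d (k + 1) = v) :
    ∀ k < m, g (d k) (d (k + 1)) = g (d 0) (d 1) := by
  intro k
  induction k with
  | zero => intro _; rfl
  | succ k ih =>
    intro hk
    rw [← ih (by omega)]
    have hin : ∑ u, g u (d (k + 1)) = g (d k) (d (k + 1)) := by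
      refine Fintype.sum_eq_single _ fun u hu => ?_
      by_contra hne
      obtain ⟨j, hj, rfl, hj'⟩ := hsupp _ _ hne
      apply hu
      rcases Nat.lt_or_ge (j + 1) m with hlt | hge
      · have := hinj (Set.mem_Iio.2 hlt) (Set.mem_Iio.2 hk) hj'
        rw [Nat.succ_injective this]
      · have hjm : j + 1 = m := by omega
        rw [hjm, ← hd] at hj'
        have := hinj (Set.mem_Iio.2 (by omega)) (Set.mem_Iio.2 hk) hj'
        omega
    have hout : ∑ u, g (d (k + 1)) u = g (d (k + 1)) (d (k + 1 + 1)) := by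
      refine Fintype.sum_eq_single _ fun u hu => ?_
      by_contra hne
      obtain ⟨j, hj, hj', rfl⟩ := hsupp _ _ hne
      exact hu (by rw [hinj (Set.mem_Iio.2 hj) (Set.mem_Iio.2 hk) hj'])
    rw [← hin, ← hout, hcons]

/-- If the indicator function `χ` of the arcs of a simple directed cycle
decomposes as `χ = g + h` with `g, h` nonnegative circulations, then `g = a·χ` and
`h = (1−a)·χ` for some `a ∈ [0,1]`; hence `χ` spans an extreme ray of the cone of
nonnegative circulations. -/
theorem stmt6 {V : Type*} [Fintype V] {m : ℕ} (hm : 1 ≤ m)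
    (c : Fin (m + 1) → V)
    (hc0 : c 0 = c (Fin.last m))
    (hinj : Function.Injective (fun i : Fin m => c i.castSucc))
    (χ : V → V → ℝ)
    (hχ : ∀ u v, χ u v =
      if ∃ i : Fin m, c i.castSucc = u ∧ c i.succ = v then 1 else 0)
    (g h : V → V → ℝ)
    (hgnn : ∀ u v, 0 ≤ g u v) (hgcons : ∀ v, ∑ u, g u v = ∑ u, g v u)
    (hhnn : ∀ u v, 0 ≤ h u v) (hhcons : ∀ v, ∑ u, h u v = ∑ u, h v u)
    (hsum : ∀ u v, χ u v = g u v + h u v) :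
    ∃ a : ℝ, 0 ≤ a ∧ a ≤ 1 ∧
      (∀ u v, g u v = a * χ u v) ∧ (∀ u v, h u v = (1 - a) * χ u v) := by
  let d : ℕ → V := fun k => c (Fin.ofNat (m + 1) k)
  have hd : ∀ k (hk : k < m + 1), d k = c ⟨k, hk⟩ := fun k hk =>
    congrArg c (Fin.ext (Nat.mod_eq_of_lt hk))
  have harc : ∀ u v, (∃ i : Fin m, c i.castSucc = u ∧ c i.succ = v) ↔
      ∃ k < m, d k = u ∧ d (k + 1) = v := by
    intro u v
    constructor
    · rintro ⟨i, hu, hv⟩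
      exact ⟨i, i.2, (hd _ (by omega)).trans hu, (hd _ (by omega)).trans hv⟩
    · rintro ⟨k, hk, hu, hv⟩
      exact ⟨⟨k, hk⟩, (hd _ (by omega)).symm.trans hu, (hd _ (by omega)).symm.trans hv⟩
  have hclosed : d 0 = d m := by
    rw [hd 0 (by omega), hd m (by omega)]
    exact hc0
  have hdinj : Set.InjOn d (Set.Iio m) := by
    intro i hi j hj hij
    rw [Set.mem_Iio] at hi hj
    rw [hd i (by omega), hd j (by omega)] at hij
    exact congrArg Fin.val (@hinj ⟨i, hi⟩ ⟨j, hj⟩ hij)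
  simp only [harc] at hχ
  have hoff : ∀ u v, (¬ ∃ k < m, d k = u ∧ d (k + 1) = v) → g u v = 0 := by
    intro u v huv
    have h0 := hsum u v
    rw [hχ, if_neg huv] at h0
    linarith [hgnn u v, hhnn u v]
  have hconst := circulation_eq_on_cycle_arcs hclosed hdinj hgcons
    fun u v huv => by_contra fun hno => huv (hoff u v hno)
  have hg : ∀ u v, g u v = g (d 0) (d 1) * χ u v := by
    intro u v
    rw [hχ]
    split_ifs with huv
    · obtain ⟨k, hk, rfl, rfl⟩ := huv
      rw [hconst k hk, mul_one]
    · rw [hoff u v huv, mul_zero]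
  refine ⟨g (d 0) (d 1), hgnn _ _, ?_, hg, fun u v => ?_⟩
  · have h1 := hsum (d 0) (d 1)
    rw [hχ, if_pos ⟨0, hm, rfl, rfl⟩] at h1
    linarith [hhnn (d 0) (d 1)]
  · linarith [hsum u v, hg u v]
end
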